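/- Let λ ≥ 2 and let u ∈ L^∞(ℝ₊) be twice continuously differentiable on ℝ₊ with u′ ∈ L^∞(ℝ₊). Then for every x > 0, lim_{σ→1⁻} (1/Γ(−σ)) ∫₀^∞ (W_t^λ u(x) − u(x)) t^{−1−σ} dt = −u″(x) + (λ(λ−1)/x²) u(x). -/

import Mathlib

open Real MeasureTheory Set Filter

noncomputable section

/-- The modified Bessel function of the first kind `I_ν(z)`. -/
def besselI (ν z : ℝ) : ℝ :=
  ∑' k : ℕ, (z / 2) ^ (2 * (k : ℝ) + ν) / ((Nat.factorial k : ℝ) * Real.Gamma ((k : ℝ) + ν + 1))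

/-- The Bessel heat kernel `W_t^λ(x,y)`. -/
def besselHeatKernel (lam t x y : ℝ) : ℝ :=
  Real.sqrt (x * y) / (2 * t) * besselI (lam - 1 / 2) (x * y / (2 * t)) *
    Real.exp (-(x ^ 2 + y ^ 2) / (4 * t))

/-- The Bessel–Poisson kernel `P_t^λ(x,y)`, obtained by subordination. -/
def besselPoissonKernel (lam t x y : ℝ) : ℝ :=
  t / (2 * Real.sqrt Real.pi) *
    ∫ s in Set.Ioi (0 : ℝ),
      s ^ (-(3 : ℝ) / 2) * Real.exp (-t ^ 2 / (4 * s)) * besselHeatKernel lam s x y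

/-- The Bessel heat semigroup `W_t^λ u (x)`. -/
def heatSemigroup (lam : ℝ) (u : ℝ → ℝ) (t x : ℝ) : ℝ :=
  ∫ y in Set.Ioi (0 : ℝ), besselHeatKernel lam t x y * u y

/-- The Bessel–Poisson semigroup `P_t^λ f (x)`. -/
def poissonSemigroup (lam : ℝ) (f : ℝ → ℝ) (t x : ℝ) : ℝ :=
  ∫ y in Set.Ioi (0 : ℝ), besselPoissonKernel lam t x y * f y

/-- The set of Hölder quotients of `f` on `(0,∞)`. -/
def holderRatioSet (α : ℝ) (f : ℝ → ℝ) : Set ℝ :=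
  {r | ∃ x y : ℝ, 0 < x ∧ 0 < y ∧ x ≠ y ∧ r = |f x - f y| / |x - y| ^ α}

/-- The set of growth quotients `|f x|/x^α` of `f` on `(0,∞)`. -/
def growthRatioSet (α : ℝ) (f : ℝ → ℝ) : Set ℝ :=
  {r | ∃ x : ℝ, 0 < x ∧ r = |f x| / x ^ α}

/-- Membership in the Hölder space `C^α_+` (equal to `Lip_+` when `α = 1`). -/
def MemHolderPlus (α : ℝ) (f : ℝ → ℝ) : Prop :=
  ContinuousOn f (Set.Ioi 0) ∧ BddAbove (holderRatioSet α f) ∧ BddAbove (growthRatioSet α f)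

/-- The `C^α_+` norm. -/
def holderPlusNorm (α : ℝ) (f : ℝ → ℝ) : ℝ :=
  sSup (holderRatioSet α f) + sSup (growthRatioSet α f)

/-- `Γ(-σ)`, written through the functional equation `Γ(-σ) = Γ(2-σ)/((-σ)(1-σ))`. -/
def gammaNeg (σ : ℝ) : ℝ := Real.Gamma (2 - σ) / (-σ * (1 - σ))

/-- The kernel `K_σ^λ(x,y)`. -/
def fracKernelK (lam σ x y : ℝ) : ℝ :=
  1 / (-gammaNeg σ) * ∫ t in Set.Ioi (0 : ℝ), besselHeatKernel lam t x y * t ^ (-1 - σ)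

/-- `W_t^λ 1 (x)`. -/
def heatOne (lam t x : ℝ) : ℝ := ∫ y in Set.Ioi (0 : ℝ), besselHeatKernel lam t x y

/-- The function `B_σ^λ(x)`. -/
def fracFunB (lam σ x : ℝ) : ℝ :=
  1 / gammaNeg σ * ∫ t in Set.Ioi (0 : ℝ), (heatOne lam t x - 1) * t ^ (-1 - σ)

/-- The integer `m` with `m - 1 ≤ β < m`. -/
def fracOrder (β : ℝ) : ℕ := Nat.floor β + 1

/-- The Segovia–Wheeden fractional derivative `∂_t^β F(t)`, a complex number. -/
def fracDeriv (β : ℝ) (F : ℝ → ℝ) (t : ℝ) : ℂ :=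
  Complex.exp (-(Real.pi * ((fracOrder β : ℝ) - β)) * Complex.I) /
      Complex.ofReal (Real.Gamma ((fracOrder β : ℝ) - β)) *
    Complex.ofReal
      (∫ s in Set.Ioi (0 : ℝ),
        iteratedDeriv (fracOrder β) F (t + s) * s ^ ((fracOrder β : ℝ) - β - 1))

open scoped Nat Topology

/-!
By the power series of the Bessel function, `W_t(x, y) (y / x)^λ` is a mixture, with the Poisson
weights of parameter `x²/(4t)`, of densities whose even moments are quotients of Gamma values, so
the heat semigroup is known in closed form on the span of `y^λ`, `y^{λ+2}` and `y^{λ+4}`. These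
functions realize every second-order jet at `x`, and a Gaussian upper bound for the kernel shows
that a remainder `o((y - x)²)` contributes only `o(t)`: hence, as `t → 0⁺`,
`W_t u(x) - u(x) = -t Δ_λ u(x) + o(t)`. Since `W_t u(x)` is bounded for `t` away from `0`, the
substitution `t = s^{1/(1-σ)}` and dominated convergence identify the limit as `σ → 1⁻`.
-/

/-! ### The modified Bessel function -/

/-- The entire part of the modified Bessel function: `I_ν(z) = (z/2)^ν · reducedBesselI ν z` for
`z > 0`. Unlike `besselI`, it is a genuine power series, with no junk values of real powers. -/
def reducedBesselI (ν z : ℝ) : ℝ :=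
  ∑' k : ℕ, (z / 2) ^ (2 * k) / ((k ! : ℝ) * Gamma (k + ν + 1))

theorem besselI_eq_rpow_mul_reducedBesselI (ν : ℝ) {z : ℝ} (hz : 0 < z) :
    besselI ν z = (z / 2) ^ ν * reducedBesselI ν z := by
  rw [besselI, reducedBesselI, ← tsum_mul_left]
  refine tsum_congr fun k => ?_
  rw [rpow_add (by positivity), ← rpow_natCast]
  push_cast
  ring

section ReducedBessel

variable {ν : ℝ}

theorem Gamma_natCast_add_add_one_pos (hν : -1 < ν) (k : ℕ) : 0 < Gamma (k + ν + 1) :=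
  Gamma_pos_of_pos (by linarith [k.cast_nonneg (α := ℝ)])

theorem reducedBesselI_term_nonneg (hν : -1 < ν) (z : ℝ) (k : ℕ) :
    0 ≤ (z / 2) ^ (2 * k) / ((k ! : ℝ) * Gamma (k + ν + 1)) := by
  have := Gamma_natCast_add_add_one_pos hν k
  have := (even_two_mul k).pow_nonneg (z / 2)
  positivity

theorem reducedBesselI_nonneg (hν : -1 < ν) (z : ℝ) : 0 ≤ reducedBesselI ν z :=
  tsum_nonneg (reducedBesselI_term_nonneg hν z)

variable (hν : -(1 / 2) ≤ ν)
include hν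

theorem factorial_two_mul_mul_Gamma_le (k : ℕ) :
    ((2 * k)! : ℝ) * Gamma (ν + 1) ≤ 4 ^ k * (k ! * Gamma (k + ν + 1)) := by
  induction k with
  | zero => simp
  | succ k ih =>
    have hpos : 0 < k + ν + 1 := by linarith [k.cast_nonneg (α := ℝ)]
    have hΓ : Gamma (↑(k + 1) + ν + 1) = (k + ν + 1) * Gamma (k + ν + 1) := by
      rw [← Gamma_add_one hpos.ne']
      push_cast
      ring_nf
    have hfact : ((2 * (k + 1))! : ℝ) = (2 * k + 2) * (2 * k + 1) * (2 * k)! := by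
      rw [mul_add, mul_one, Nat.factorial_succ, Nat.factorial_succ]
      push_cast
      ring
    have := Gamma_natCast_add_add_one_pos (by linarith : -1 < ν) k
    have : 0 < Gamma (ν + 1) := Gamma_pos_of_pos (by linarith)
    calc ((2 * (k + 1))! : ℝ) * Gamma (ν + 1)
        = (2 * k + 2) * (2 * k + 1) * ((2 * k)! * Gamma (ν + 1)) := by rw [hfact]; ring
      _ ≤ (2 * k + 2) * (2 * (k + ν + 1)) * (4 ^ k * (k ! * Gamma (k + ν + 1))) := by
        gcongr
        linarith
      _ = 4 ^ (k + 1) * ((k + 1)! * Gamma (↑(k + 1) + ν + 1)) := by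
        rw [hΓ, Nat.factorial_succ]
        push_cast
        ring

theorem reducedBesselI_term_le (z : ℝ) (k : ℕ) :
    (z / 2) ^ (2 * k) / ((k ! : ℝ) * Gamma (k + ν + 1)) ≤
      z ^ (2 * k) / (2 * k)! / Gamma (ν + 1) := by
  have := Gamma_natCast_add_add_one_pos (by linarith : -1 < ν) k
  have : 0 < Gamma (ν + 1) := Gamma_pos_of_pos (by linarith)
  rw [div_pow, pow_mul 2 2 k, div_div, div_div]
  norm_num only
  exact div_le_div_of_nonneg_left ((even_two_mul k).pow_nonneg z) (by positivity)
    (factorial_two_mul_mul_Gamma_le hν k)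

theorem summable_reducedBesselI (z : ℝ) :
    Summable fun k : ℕ => (z / 2) ^ (2 * k) / ((k ! : ℝ) * Gamma (k + ν + 1)) :=
  .of_nonneg_of_le (reducedBesselI_term_nonneg (by linarith) z) (reducedBesselI_term_le hν z)
    ((hasSum_cosh z).summable.div_const _)

theorem reducedBesselI_le (z : ℝ) : reducedBesselI ν z ≤ exp |z| / Gamma (ν + 1) := by
  have : 0 < Gamma (ν + 1) := Gamma_pos_of_pos (by linarith)
  calc reducedBesselI ν z ≤ cosh z / Gamma (ν + 1) :=
        hasSum_le (reducedBesselI_term_le hν z) (summable_reducedBesselI hν z).hasSum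
          ((hasSum_cosh z).div_const _)
    _ ≤ exp |z| / Gamma (ν + 1) := by
        gcongr
        rw [← cosh_abs, cosh_eq]
        have : exp (-|z|) ≤ exp |z| := exp_le_exp.2 (by linarith [abs_nonneg z])
        linarith

theorem measurable_reducedBesselI : Measurable (reducedBesselI ν) :=
  measurable_of_tendsto_metrizable
    (f := fun n z => ∑ k ∈ Finset.range n, (z / 2) ^ (2 * k) / ((k ! : ℝ) * Gamma (k + ν + 1)))
    (fun _ => by fun_prop)
    (tendsto_pi_nhds.2 fun z => (summable_reducedBesselI hν z).hasSum.tendsto_sum_nat)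

end ReducedBessel

/-! ### The Bessel heat kernel -/

theorem besselHeatKernel_eq (lam : ℝ) {t x y : ℝ} (ht : 0 < t) (hx : 0 < x) (hy : 0 < y) :
    besselHeatKernel lam t x y =
      2 * (x * y) ^ lam / (4 * t) ^ (lam + 1 / 2) *
        reducedBesselI (lam - 1 / 2) (x * y / (2 * t)) * exp (-(x ^ 2 + y ^ 2) / (4 * t)) := by
  have hprefactor : √(x * y) / (2 * t) * (x * y / (2 * t) / 2) ^ (lam - 1 / 2) =
      2 * (x * y) ^ lam / (4 * t) ^ (lam + 1 / 2) := by
    rw [div_div, show 2 * t * 2 = 4 * t by ring, div_rpow (by positivity) (by positivity),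
      sqrt_eq_rpow, rpow_sub (by positivity), rpow_sub (by positivity), rpow_add (by positivity),
      ← sqrt_eq_rpow, ← sqrt_eq_rpow]
    field_simp
    rw [sq_sqrt (by positivity)]
    ring
  rw [besselHeatKernel, besselI_eq_rpow_mul_reducedBesselI _ (by positivity), ← mul_assoc,
    hprefactor]

/-- The weight `y^λ e^{-(x-y)²/a}`; with `a = 4t` it dominates the Bessel heat kernel up to the
factor `kernelConst`. -/
def gaussianWeight (lam a x y : ℝ) : ℝ := y ^ lam * exp (-(x - y) ^ 2 / a)

theorem gaussianWeight_pos (lam a x : ℝ) {y : ℝ} (hy : 0 < y) : 0 < gaussianWeight lam a x y :=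
  mul_pos (rpow_pos_of_pos hy _) (exp_pos _)

theorem measurable_gaussianWeight (lam a x : ℝ) : Measurable (gaussianWeight lam a x) := by
  unfold gaussianWeight
  fun_prop

/-- The factor in the Gaussian upper bound `besselHeatKernel_le`. -/
def kernelConst (lam t x : ℝ) : ℝ :=
  2 * x ^ lam / ((4 * t) ^ (lam + 1 / 2) * Gamma (lam + 1 / 2))

section KernelBounds

variable {lam : ℝ} (hlam : 0 ≤ lam)
include hlam

theorem kernelConst_pos {t x : ℝ} (ht : 0 < t) (hx : 0 < x) : 0 < kernelConst lam t x := by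
  have := Gamma_pos_of_pos (by positivity : 0 < lam + 1 / 2)
  unfold kernelConst
  positivity

theorem besselHeatKernel_nonneg {t x y : ℝ} (ht : 0 < t) (hx : 0 < x) (hy : 0 < y) :
    0 ≤ besselHeatKernel lam t x y := by
  have := reducedBesselI_nonneg (by linarith : -1 < lam - 1 / 2) (x * y / (2 * t))
  rw [besselHeatKernel_eq lam ht hx hy]
  positivity

theorem besselHeatKernel_le {t x y : ℝ} (ht : 0 < t) (hx : 0 < x) (hy : 0 < y) :
    besselHeatKernel lam t x y ≤ kernelConst lam t x * gaussianWeight lam (4 * t) x y := by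
  have hbessel := reducedBesselI_le (by linarith : -(1 / 2) ≤ lam - 1 / 2) (x * y / (2 * t))
  rw [abs_of_pos (by positivity), show lam - 1 / 2 + 1 = lam + 1 / 2 by ring] at hbessel
  have hexp : exp (x * y / (2 * t)) * exp (-(x ^ 2 + y ^ 2) / (4 * t)) =
      exp (-(x - y) ^ 2 / (4 * t)) := by
    rw [← exp_add]
    congr 1
    field_simp
    ring
  calc besselHeatKernel lam t x y
      ≤ 2 * (x * y) ^ lam / (4 * t) ^ (lam + 1 / 2) *
          (exp (x * y / (2 * t)) / Gamma (lam + 1 / 2)) * exp (-(x ^ 2 + y ^ 2) / (4 * t)) := by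
        rw [besselHeatKernel_eq lam ht hx hy]
        gcongr
    _ = kernelConst lam t x * gaussianWeight lam (4 * t) x y := by
        rw [kernelConst, gaussianWeight, ← hexp, mul_rpow hx.le hy.le]
        ring

theorem exists_measurable_eq_besselHeatKernel {x : ℝ} (hx : 0 < x) :
    ∃ K : ℝ × ℝ → ℝ, Measurable K ∧
      ∀ t > 0, ∀ y > 0, K (t, y) = besselHeatKernel lam t x y := by
  have hmeas := measurable_reducedBesselI (by linarith : -(1 / 2) ≤ lam - 1 / 2)
  exact ⟨fun p => 2 * (x * p.2) ^ lam / (4 * p.1) ^ (lam + 1 / 2) *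
      reducedBesselI (lam - 1 / 2) (x * p.2 / (2 * p.1)) * exp (-(x ^ 2 + p.2 ^ 2) / (4 * p.1)),
    by fun_prop, fun t ht y hy => (besselHeatKernel_eq lam ht hx hy).symm⟩

theorem aestronglyMeasurable_besselHeatKernel {t x : ℝ} (ht : 0 < t) (hx : 0 < x) :
    AEStronglyMeasurable (besselHeatKernel lam t x) (volume.restrict (Ioi 0)) := by
  obtain ⟨K, hK, hKeq⟩ := exists_measurable_eq_besselHeatKernel hlam hx
  have : Measurable fun y => K (t, y) := by fun_prop
  exact this.aestronglyMeasurable.congr <|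
    ae_restrict_of_forall_mem measurableSet_Ioi fun y hy => hKeq t ht y hy

theorem aestronglyMeasurable_heatSemigroup {x : ℝ} (hx : 0 < x) {u : ℝ → ℝ}
    (hu : AEStronglyMeasurable u (volume.restrict (Ioi 0))) :
    AEStronglyMeasurable (fun t => heatSemigroup lam u t x) (volume.restrict (Ioi 0)) := by
  obtain ⟨K, hK, hKeq⟩ := exists_measurable_eq_besselHeatKernel hlam hx
  have hint : AEStronglyMeasurable (fun t => ∫ y in Ioi (0 : ℝ), K (t, y) * u y)
      (volume.restrict (Ioi 0)) :=
    (hK.aestronglyMeasurable.mul hu.comp_snd).integral_prod_right'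
  refine hint.congr (ae_restrict_of_forall_mem measurableSet_Ioi fun t ht => ?_)
  exact setIntegral_congr_fun measurableSet_Ioi fun y hy => by simp only [hKeq t ht y hy]

end KernelBounds

/-! ### Functions of sub-Gaussian growth -/

/-- Integrability of `f` on `(0,∞)` against every Gaussian weight centred at `x`: the class of
functions on which the heat semigroup is given by an absolutely convergent integral at `x` for all
times. It contains both `L^∞` and the powers `y^p`. -/
def GaussianIntegrable (lam x : ℝ) (f : ℝ → ℝ) : Prop :=
  ∀ a > 0, IntegrableOn (fun y => gaussianWeight lam a x y * f y) (Ioi 0)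

theorem integrableOn_gaussianWeight {lam a : ℝ} (hlam : -1 < lam) (ha : 0 < a) (x : ℝ) :
    IntegrableOn (gaussianWeight lam a x) (Ioi 0) := by
  have hdom : IntegrableOn (fun y => exp (x ^ 2 / a) *
      (y ^ lam * exp (-(1 / (2 * a)) * y ^ 2))) (Ioi 0) :=
    (integrableOn_rpow_mul_exp_neg_mul_sq (by positivity) hlam).const_mul _
  refine hdom.mono' (measurable_gaussianWeight lam a x).aestronglyMeasurable ?_
  filter_upwards [ae_restrict_mem measurableSet_Ioi] with y hy
  rw [norm_of_nonneg (gaussianWeight_pos lam a x hy).le]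
  have hsq : -(x - y) ^ 2 / a ≤ x ^ 2 / a + -(1 / (2 * a)) * y ^ 2 := by
    rw [← sub_nonneg]
    have : x ^ 2 / a + -(1 / (2 * a)) * y ^ 2 - -(x - y) ^ 2 / a =
        (2 * x - y) ^ 2 / (2 * a) := by
      field_simp
      ring
    rw [this]
    positivity
  calc gaussianWeight lam a x y
      ≤ y ^ lam * exp (x ^ 2 / a + -(1 / (2 * a)) * y ^ 2) := by
        have := rpow_nonneg (le_of_lt hy) lam
        unfold gaussianWeight
        gcongr
    _ = exp (x ^ 2 / a) * (y ^ lam * exp (-(1 / (2 * a)) * y ^ 2)) := by rw [exp_add]; ring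

namespace GaussianIntegrable

variable {lam x : ℝ} {f g : ℝ → ℝ}

theorem add (hf : GaussianIntegrable lam x f) (hg : GaussianIntegrable lam x g) :
    GaussianIntegrable lam x (fun y => f y + g y) := fun a ha =>
  ((hf a ha).add (hg a ha)).congr_fun (fun _ _ => (mul_add ..).symm) measurableSet_Ioi

theorem const_mul (hf : GaussianIntegrable lam x f) (c : ℝ) :
    GaussianIntegrable lam x (fun y => c * f y) := fun a ha =>
  IntegrableOn.congr_fun ((hf a ha).const_mul c) (fun _ _ => mul_left_comm ..) measurableSet_Ioi

theorem sub (hf : GaussianIntegrable lam x f) (hg : GaussianIntegrable lam x g) :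
    GaussianIntegrable lam x (fun y => f y - g y) := by
  simpa only [neg_one_mul, ← sub_eq_add_neg] using hf.add (hg.const_mul (-1))

theorem congr (hf : GaussianIntegrable lam x f) (hfg : ∀ y > 0, f y = g y) :
    GaussianIntegrable lam x g := fun a ha =>
  (hf a ha).congr_fun (fun y hy => congrArg (_ * ·) (hfg y hy)) measurableSet_Ioi

theorem rpow {p : ℝ} (hp : -1 < lam + p) : GaussianIntegrable lam x (fun y => y ^ p) :=
  fun a ha => by
    refine (integrableOn_gaussianWeight hp ha x).congr_fun (fun y hy => ?_) measurableSet_Ioi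
    simp only [gaussianWeight, rpow_add (mem_Ioi.1 hy)]
    ring

theorem of_memLp_top (hlam : -1 < lam) (hf : MemLp f ⊤ (volume.restrict (Ioi 0))) :
    GaussianIntegrable lam x f := fun _ ha =>
  (integrableOn_gaussianWeight hlam ha x).mul_of_top_left hf

theorem integrableOn_besselHeatKernel_mul {t : ℝ} (hf : GaussianIntegrable lam x f)
    (hlam : 0 ≤ lam) (ht : 0 < t) (hx : 0 < x) :
    IntegrableOn (fun y => besselHeatKernel lam t x y * f y) (Ioi 0) := by
  have hratio : Integrable (fun y => besselHeatKernel lam t x y / gaussianWeight lam (4 * t) x y *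
      (gaussianWeight lam (4 * t) x y * f y)) (volume.restrict (Ioi 0)) := by
    refine (hf (4 * t) (by positivity)).bdd_mul (c := kernelConst lam t x) ?_ ?_
    · exact ((aestronglyMeasurable_besselHeatKernel hlam ht hx).aemeasurable.div
        (measurable_gaussianWeight ..).aemeasurable).aestronglyMeasurable
    · filter_upwards [ae_restrict_mem measurableSet_Ioi] with y hy
      have hW := besselHeatKernel_nonneg hlam ht hx hy
      have hw := gaussianWeight_pos lam (4 * t) x hy
      rw [norm_of_nonneg (by positivity), div_le_iff₀ hw]
      exact besselHeatKernel_le hlam ht hx hy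
  refine IntegrableOn.congr_fun hratio (fun y hy => ?_) measurableSet_Ioi
  have := (gaussianWeight_pos lam (4 * t) x hy).ne'
  field_simp

theorem heatSemigroup_add {t : ℝ} (hf : GaussianIntegrable lam x f)
    (hg : GaussianIntegrable lam x g) (hlam : 0 ≤ lam) (ht : 0 < t) (hx : 0 < x) :
    heatSemigroup lam (fun y => f y + g y) t x =
      heatSemigroup lam f t x + heatSemigroup lam g t x := by
  simp only [heatSemigroup, mul_add]
  exact integral_add (hf.integrableOn_besselHeatKernel_mul hlam ht hx)
    (hg.integrableOn_besselHeatKernel_mul hlam ht hx)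

end GaussianIntegrable

theorem heatSemigroup_const_mul (lam c : ℝ) (f : ℝ → ℝ) (t x : ℝ) :
    heatSemigroup lam (fun y => c * f y) t x = c * heatSemigroup lam f t x := by
  simp only [heatSemigroup, mul_left_comm _ c]
  exact integral_const_mul c _

/-! ### Moments of the heat kernel -/

theorem hasSum_descFactorial_mul_pow_div_factorial (m : ℕ) (q : ℝ) :
    HasSum (fun n : ℕ => n.descFactorial m * (q ^ n / n !)) (q ^ m * exp q) := by
  have hlow : ∑ n ∈ Finset.range m, (n.descFactorial m : ℝ) * (q ^ n / n !) = 0 :=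
    Finset.sum_eq_zero fun n hn => by
      rw [Nat.descFactorial_of_lt (Finset.mem_range.1 hn), Nat.cast_zero, zero_mul]
  have hshift (n : ℕ) :
      ((n + m).descFactorial m : ℝ) * (q ^ (n + m) / (n + m)!) = q ^ m * (q ^ n / n !) := by
    have hfact : (n ! : ℝ) * (n + m).descFactorial m = (n + m)! := by
      exact_mod_cast Nat.add_sub_cancel n m ▸ Nat.factorial_mul_descFactorial (Nat.le_add_left m n)
    rw [← hfact, pow_add]
    have : ((n + m).descFactorial m : ℝ) ≠ 0 := by
      exact_mod_cast (Nat.descFactorial_pos.2 (Nat.le_add_left m n)).ne'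
    field_simp
  rw [← hasSum_nat_add_iff' m, hlow, sub_zero]
  simp only [hshift]
  rw [exp_eq_exp_ℝ]
  exact (NormedSpace.expSeries_div_hasSum_exp q).mul_left _

/-- The density on `(0,∞)` of the square root of a Gamma variable with shape `α` and scale `c`
(the Nakagami distribution). -/
def nakagamiDensity (α c y : ℝ) : ℝ :=
  2 * y ^ (2 * α - 1) * exp (-y ^ 2 / c) / (c ^ α * Gamma α)

theorem nakagamiDensity_mul_sq_pow (α c : ℝ) (m : ℕ) {y : ℝ} (hy : 0 < y) :
    nakagamiDensity α c y * (y ^ 2) ^ m =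
      2 / (c ^ α * Gamma α) * (y ^ (2 * (α + m) - 1) * exp (-c⁻¹ * y ^ 2)) := by
  have hpow : y ^ (2 * (α + m) - 1) = y ^ (2 * α - 1) * (y ^ 2) ^ m := by
    rw [← pow_mul, ← rpow_natCast, ← rpow_add hy]
    push_cast
    ring_nf
  rw [nakagamiDensity, hpow]
  ring_nf

section Nakagami

variable {α c : ℝ} (hα : 0 < α) (hc : 0 < c)
include hα hc

theorem nakagamiDensity_nonneg {y : ℝ} (hy : 0 < y) : 0 ≤ nakagamiDensity α c y := by
  have := Gamma_pos_of_pos hα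
  unfold nakagamiDensity
  positivity

theorem integrableOn_nakagamiDensity_mul_sq_pow (m : ℕ) :
    IntegrableOn (fun y => nakagamiDensity α c y * (y ^ 2) ^ m) (Ioi 0) :=
  IntegrableOn.congr_fun
    ((integrableOn_rpow_mul_exp_neg_mul_sq (inv_pos.2 hc)
      (by linarith [m.cast_nonneg (α := ℝ)])).const_mul _)
    (fun _ hy => (nakagamiDensity_mul_sq_pow α c m hy).symm) measurableSet_Ioi

theorem integral_nakagamiDensity_mul_sq_pow (m : ℕ) :
    ∫ y in Ioi 0, nakagamiDensity α c y * (y ^ 2) ^ m = c ^ m * (Gamma (α + m) / Gamma α) := by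
  have hgamma := integral_rpow_mul_exp_neg_mul_rpow (p := 2) (q := 2 * (α + m) - 1) two_pos
    (by linarith [m.cast_nonneg (α := ℝ)]) (inv_pos.2 hc)
  simp only [rpow_two] at hgamma
  rw [setIntegral_congr_fun measurableSet_Ioi fun _ hy => nakagamiDensity_mul_sq_pow α c m hy,
    integral_const_mul, hgamma, show (2 * (α + m) - 1 + 1) / 2 = α + m by ring,
    show -(2 * (α + m) - 1 + 1) / 2 = -(α + m) by ring, inv_rpow hc.le, rpow_neg hc.le, inv_inv,
    rpow_add hc, rpow_natCast]
  have := (Gamma_pos_of_pos hα).ne'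
  have := (rpow_pos_of_pos hc α).ne'
  field_simp

end Nakagami

section Moments

variable {lam t x : ℝ} (hlam : 0 ≤ lam) (ht : 0 < t) (hx : 0 < x)
include hlam ht hx

/-- The mixing weights `e^{-q} q^k / k!`, `q = x²/(4t)`, are those of a Poisson distribution. -/
theorem hasSum_besselHeatKernel_mul_rpow {y : ℝ} (hy : 0 < y) :
    HasSum (fun k : ℕ => x ^ lam * exp (-(x ^ 2 / (4 * t))) * ((x ^ 2 / (4 * t)) ^ k / k !) *
        nakagamiDensity (k + (lam + 1 / 2)) (4 * t) y)
      (besselHeatKernel lam t x y * y ^ lam) := by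
  have hseries := (summable_reducedBesselI (by linarith : -(1 / 2) ≤ lam - 1 / 2)
    (x * y / (2 * t))).hasSum.mul_left
      (2 * (x * y) ^ lam / (4 * t) ^ (lam + 1 / 2) * exp (-(x ^ 2 + y ^ 2) / (4 * t)) * y ^ lam)
  convert! hseries using 1
  · ext k
    have hexp : exp (-(x ^ 2 + y ^ 2) / (4 * t)) =
        exp (-(x ^ 2 / (4 * t))) * exp (-y ^ 2 / (4 * t)) := by
      rw [← exp_add]
      ring_nf
    have hy_pow : y ^ (2 * (k + (lam + 1 / 2)) - 1) = y ^ (2 * k) * y ^ lam * y ^ lam := by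
      rw [← rpow_natCast, ← rpow_add hy, ← rpow_add hy]
      push_cast
      ring_nf
    have hz_pow : (x * y / (2 * t) / 2) ^ (2 * k) =
        (x ^ 2 / (4 * t)) ^ k * y ^ (2 * k) / (4 * t) ^ k := by
      rw [pow_mul, pow_mul, ← mul_pow, ← div_pow]
      congr 1
      field_simp
      norm_num
    rw [nakagamiDensity, hexp, hy_pow, hz_pow, rpow_add (by positivity), rpow_natCast,
      mul_rpow hx.le hy.le, show (k : ℝ) + (lam - 1 / 2) + 1 = k + (lam + 1 / 2) by ring]
    field_simp
  · rw [besselHeatKernel_eq lam ht hx hy, reducedBesselI]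
    ring

theorem integral_besselHeatKernel_mul_rpow_mul_sq_pow (m : ℕ) {S : ℝ}
    (hS : HasSum (fun k : ℕ => (x ^ 2 / (4 * t)) ^ k / k ! *
      (Gamma (k + (lam + 1 / 2) + m) / Gamma (k + (lam + 1 / 2)))) (S * exp (x ^ 2 / (4 * t)))) :
    ∫ y in Ioi 0, besselHeatKernel lam t x y * (y ^ lam * (y ^ 2) ^ m) =
      x ^ lam * ((4 * t) ^ m * S) := by
  set q := x ^ 2 / (4 * t) with hq
  have hc : 0 < 4 * t := by positivity
  have hα (k : ℕ) : 0 < k + (lam + 1 / 2) := by positivity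
  let F (k : ℕ) (y : ℝ) : ℝ := x ^ lam * exp (-q) * (q ^ k / k !) *
    (nakagamiDensity (k + (lam + 1 / 2)) (4 * t) y * (y ^ 2) ^ m)
  have hF_int (k : ℕ) : IntegrableOn (F k) (Ioi 0) :=
    (integrableOn_nakagamiDensity_mul_sq_pow (hα k) hc m).const_mul _
  have hF_norm (k : ℕ) : ∫ y in Ioi 0, ‖F k y‖ = ∫ y in Ioi 0, F k y :=
    setIntegral_congr_fun measurableSet_Ioi fun y hy => by
      have := nakagamiDensity_nonneg (hα k) hc hy
      exact norm_of_nonneg (by positivity)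
  have hF_hasSum : HasSum (fun k => ∫ y in Ioi 0, F k y) (x ^ lam * ((4 * t) ^ m * S)) := by
    have hexp : exp (-q) * exp q = 1 := by rw [← exp_add, neg_add_cancel, exp_zero]
    convert! hS.mul_left (x ^ lam * (4 * t) ^ m * exp (-q)) using 1
    · ext k
      simp only [F]
      rw [integral_const_mul, integral_nakagamiDensity_mul_sq_pow (hα k) hc]
      ring
    · linear_combination (-x ^ lam * (4 * t) ^ m * S) * hexp
  have hF_tsum : ∀ y ∈ Ioi (0 : ℝ),
      ∑' k, F k y = besselHeatKernel lam t x y * (y ^ lam * (y ^ 2) ^ m) := fun y hy => by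
    rw [← mul_assoc, ← ((hasSum_besselHeatKernel_mul_rpow hlam ht hx hy).mul_right _).tsum_eq]
    exact tsum_congr fun k => by simp only [F, hq, mul_assoc]
  rw [← setIntegral_congr_fun measurableSet_Ioi hF_tsum]
  exact (hasSum_integral_of_summable_integral_norm hF_int
    (by simpa only [hF_norm] using hF_hasSum.summable)).unique hF_hasSum

theorem heatSemigroup_rpow : heatSemigroup lam (fun y => y ^ lam) t x = x ^ lam := by
  have hS := hasSum_descFactorial_mul_pow_div_factorial 0 (x ^ 2 / (4 * t))
  have hmoment := integral_besselHeatKernel_mul_rpow_mul_sq_pow hlam ht hx 0 (S := 1) (by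
    convert! hS using 1
    ext k
    have := (Gamma_pos_of_pos (by positivity : 0 < k + (lam + 1 / 2))).ne'
    rw [Nat.cast_zero, add_zero, div_self this, Nat.descFactorial_zero, Nat.cast_one]
    ring)
  simpa only [heatSemigroup, pow_zero, mul_one] using hmoment

theorem heatSemigroup_rpow_mul_sq :
    heatSemigroup lam (fun y => y ^ lam * y ^ 2) t x = x ^ lam * (x ^ 2 + (4 * lam + 2) * t) := by
  have hS := hasSum_descFactorial_mul_pow_div_factorial (q := x ^ 2 / (4 * t))
  have hmoment := integral_besselHeatKernel_mul_rpow_mul_sq_pow hlam ht hx 1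
    (S := x ^ 2 / (4 * t) + (lam + 1 / 2)) (by
      convert! (hS 1).add ((hS 0).mul_left (lam + 1 / 2)) using 1
      · ext k
        have hα : 0 < k + (lam + 1 / 2) := by positivity
        have := (Gamma_pos_of_pos hα).ne'
        rw [Nat.cast_one, Gamma_add_one hα.ne', mul_div_cancel_right₀ _ this,
          Nat.descFactorial_one, Nat.descFactorial_zero, Nat.cast_one]
        ring
      · ring)
  simp only [pow_one] at hmoment
  rw [heatSemigroup, hmoment]
  field_simp
  ring

theorem heatSemigroup_rpow_mul_sq_sq :
    heatSemigroup lam (fun y => y ^ lam * (y ^ 2) ^ 2) t x =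
      x ^ lam * (x ^ 4 + (8 * lam + 12) * t * x ^ 2 +
        16 * t ^ 2 * ((lam + 1 / 2) * (lam + 3 / 2))) := by
  have hS := hasSum_descFactorial_mul_pow_div_factorial (q := x ^ 2 / (4 * t))
  have hmoment := integral_besselHeatKernel_mul_rpow_mul_sq_pow hlam ht hx 2
    (S := (x ^ 2 / (4 * t)) ^ 2 + (2 * lam + 3) * (x ^ 2 / (4 * t)) +
      (lam + 1 / 2) * (lam + 3 / 2)) (by
      convert! ((hS 2).add ((hS 1).mul_left (2 * lam + 3))).add
        ((hS 0).mul_left ((lam + 1 / 2) * (lam + 3 / 2))) using 1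
      · ext k
        have hα : 0 < k + (lam + 1 / 2) := by positivity
        have := (Gamma_pos_of_pos hα).ne'
        rw [Nat.cast_two, show k + (lam + 1 / 2) + 2 = k + (lam + 1 / 2) + 1 + 1 by ring,
          Gamma_add_one (by positivity), Gamma_add_one hα.ne', ← mul_assoc,
          mul_div_cancel_right₀ _ this, Nat.cast_descFactorial_two, Nat.descFactorial_one,
          Nat.descFactorial_zero, Nat.cast_one]
        ring
      · ring)
  rw [heatSemigroup, hmoment]
  field_simp
  ring

end Moments

/-! ### Exactness on a three-dimensional space of test functions -/

/-- The functions `y^λ (A + B (y² - x²) + C (y² - x²)²)`. The heat semigroup acts on them by a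
closed formula, and the three coefficients can be matched to any second-order jet at `x`. -/
def testFunction (lam x A B C y : ℝ) : ℝ :=
  y ^ lam * (A + B * (y ^ 2 - x ^ 2) + C * (y ^ 2 - x ^ 2) ^ 2)

/-- The derivative of `testFunction lam x A B C` on `(0,∞)`. -/
def testFunctionDeriv (lam x A B C y : ℝ) : ℝ :=
  lam * y ^ (lam - 1) * (A + B * (y ^ 2 - x ^ 2) + C * (y ^ 2 - x ^ 2) ^ 2) +
    y ^ lam * (2 * y * (B + 2 * C * (y ^ 2 - x ^ 2)))

theorem testFunction_eq_sum_even_powers (lam x A B C y : ℝ) :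
    testFunction lam x A B C y =
      (A - B * x ^ 2 + C * x ^ 4) * y ^ lam + (B - 2 * C * x ^ 2) * (y ^ lam * y ^ 2) +
        C * (y ^ lam * (y ^ 2) ^ 2) := by
  rw [testFunction]
  ring

theorem gaussianIntegrable_rpow_mul_sq_pow {lam : ℝ} (hlam : 0 ≤ lam) (x : ℝ) (m : ℕ) :
    GaussianIntegrable lam x (fun y => y ^ lam * (y ^ 2) ^ m) :=
  (GaussianIntegrable.rpow (p := lam + (2 * m : ℕ))
    (neg_one_lt_zero.trans_le (by positivity))).congr fun y hy => by
      rw [rpow_add hy, rpow_natCast, pow_mul]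

section TestFunction

variable {lam x : ℝ} (A B C : ℝ)

theorem gaussianIntegrable_testFunction (hlam : 0 ≤ lam) :
    GaussianIntegrable lam x (testFunction lam x A B C) := by
  have hmono := gaussianIntegrable_rpow_mul_sq_pow hlam x
  refine ((((hmono 0).const_mul (A - B * x ^ 2 + C * x ^ 4)).add
    ((hmono 1).const_mul (B - 2 * C * x ^ 2))).add ((hmono 2).const_mul C)).congr fun y _ => ?_
  simp only [testFunction_eq_sum_even_powers, pow_zero, pow_one, mul_one]

theorem heatSemigroup_testFunction {t : ℝ} (hlam : 0 ≤ lam) (ht : 0 < t) (hx : 0 < x) :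
    heatSemigroup lam (testFunction lam x A B C) t x =
      x ^ lam * (A + B * (4 * lam + 2) * t +
        C * (8 * x ^ 2 * t + 16 * t ^ 2 * ((lam + 1 / 2) * (lam + 3 / 2)))) := by
  have h0 : GaussianIntegrable lam x (fun y => y ^ lam) := by
    simpa only [pow_zero, mul_one] using gaussianIntegrable_rpow_mul_sq_pow hlam x 0
  have h1 : GaussianIntegrable lam x (fun y => y ^ lam * y ^ 2) := by
    simpa only [pow_one] using gaussianIntegrable_rpow_mul_sq_pow hlam x 1
  have h2 := gaussianIntegrable_rpow_mul_sq_pow hlam x 2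
  rw [funext (testFunction_eq_sum_even_powers lam x A B C),
    ((h0.const_mul _).add (h1.const_mul _)).heatSemigroup_add (h2.const_mul C) hlam ht hx,
    (h0.const_mul _).heatSemigroup_add (h1.const_mul _) hlam ht hx,
    heatSemigroup_const_mul, heatSemigroup_const_mul, heatSemigroup_const_mul,
    heatSemigroup_rpow hlam ht hx, heatSemigroup_rpow_mul_sq hlam ht hx,
    heatSemigroup_rpow_mul_sq_sq hlam ht hx]
  ring

theorem hasDerivAt_sq_sub_sq (x y : ℝ) : HasDerivAt (fun z => z ^ 2 - x ^ 2) (2 * y) y := by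
  simpa using (hasDerivAt_pow 2 y).sub_const (x ^ 2)

theorem hasDerivAt_quadratic_sq_sub_sq (x y : ℝ) :
    HasDerivAt (fun z => A + B * (z ^ 2 - x ^ 2) + C * (z ^ 2 - x ^ 2) ^ 2)
      (2 * y * (B + 2 * C * (y ^ 2 - x ^ 2))) y := by
  have hsq := hasDerivAt_sq_sub_sq x y
  refine (((hsq.const_mul B).const_add A).add ((hsq.pow 2).const_mul C)).congr_deriv ?_
  push_cast
  ring

theorem hasDerivAt_testFunction {y : ℝ} (hy : 0 < y) :
    HasDerivAt (testFunction lam x A B C) (testFunctionDeriv lam x A B C y) y :=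
  (hasDerivAt_rpow_const (Or.inl hy.ne')).mul (hasDerivAt_quadratic_sq_sub_sq A B C x y)

theorem hasDerivAt_testFunctionDeriv (hx : 0 < x) :
    HasDerivAt (testFunctionDeriv lam x A B C)
      (x ^ lam * (lam * (lam - 1) / x ^ 2 * A + (4 * lam + 2) * B + 8 * C * x ^ 2)) x := by
  have hrpow (p : ℝ) : HasDerivAt (fun y : ℝ => y ^ p) (p * x ^ (p - 1)) x :=
    hasDerivAt_rpow_const (Or.inl hx.ne')
  have hlin : HasDerivAt (fun y : ℝ => 2 * y) 2 x := by
    simpa using (hasDerivAt_id x).const_mul 2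
  have hinner := ((hasDerivAt_sq_sub_sq x x).const_mul (2 * C)).const_add B
  refine ((((hrpow (lam - 1)).const_mul lam).mul (hasDerivAt_quadratic_sq_sub_sq A B C x x)).add
    ((hrpow lam).mul (hlin.mul hinner))).congr_deriv ?_
  simp only [rpow_sub hx, rpow_one, sub_self, Pi.mul_apply]
  field_simp
  ring

theorem exists_testFunction_jet (lam : ℝ) (hx : 0 < x) (u₀ u₁ u₂ : ℝ) :
    ∃ A B C, testFunction lam x A B C x = u₀ ∧ testFunctionDeriv lam x A B C x = u₁ ∧
      x ^ lam * (lam * (lam - 1) / x ^ 2 * A + (4 * lam + 2) * B + 8 * C * x ^ 2) = u₂ := by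
  have := rpow_pos_of_pos hx lam
  let A := u₀ / x ^ lam
  let B := (u₁ - lam * u₀ / x) / (2 * x * x ^ lam)
  refine ⟨A, B, (u₂ / x ^ lam - lam * (lam - 1) / x ^ 2 * A - (4 * lam + 2) * B) / (8 * x ^ 2),
    ?_, ?_, ?_⟩
  · simp only [testFunction, A]
    field_simp
    ring
  · simp only [testFunctionDeriv, A, B, rpow_sub hx, rpow_one]
    field_simp
    ring
  · field_simp
    ring

end TestFunction

/-! ### Small-time behaviour -/

theorem isLittleO_sq_of_hasDerivAt_zero {f f' : ℝ → ℝ} {x : ℝ}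
    (hf : ∀ᶠ y in 𝓝 x, HasDerivAt f (f' y) y) (hf' : HasDerivAt f' 0 x)
    (hfx : f x = 0) (hf'x : f' x = 0) : f =o[𝓝 x] fun y => (y - x) ^ 2 := by
  obtain ⟨ε, hε, hball⟩ := Metric.eventually_nhds_iff_ball.1 hf
  have hnhds := Metric.ball_mem_nhds x hε
  have hf'_little : f' =o[𝓝[Metric.ball x ε] x] fun y => (y - x) ^ 1 := by
    simpa [hf'x, nhdsWithin_eq_nhds.2 hnhds] using hf'.isLittleO
  simpa [hfx, nhdsWithin_eq_nhds.2 hnhds] using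
    (convex_ball x ε).isLittleO_pow_succ_real (Metric.mem_ball_self hε)
      (fun y hy => (hball y hy).hasDerivWithinAt) hf'_little

theorem testFunction_zero_zero_one_nonneg (lam x : ℝ) {y : ℝ} (hy : 0 < y) :
    0 ≤ testFunction lam x 0 0 1 y := by
  simp only [testFunction, zero_mul, zero_add, one_mul]
  positivity

theorem sub_sq_isBigO_testFunction (lam : ℝ) {x : ℝ} (hx : 0 < x) :
    (fun y => (y - x) ^ 2) =O[𝓝 x] testFunction lam x 0 0 1 := by
  have hne : x ^ lam * (x + x) ^ 2 ≠ 0 := by positivity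
  have hcont : ContinuousAt (fun y => (y ^ lam * (y + x) ^ 2)⁻¹) x :=
    ((continuousAt_rpow_const x lam (Or.inl hx.ne')).mul (by fun_prop)).inv₀ hne
  have hfactor : (fun y => (y ^ lam * (y + x) ^ 2)⁻¹ * testFunction lam x 0 0 1 y) =ᶠ[𝓝 x]
      fun y => (y - x) ^ 2 := by
    filter_upwards [eventually_gt_nhds hx] with y hy
    have := rpow_pos_of_pos hy lam
    rw [testFunction]
    field_simp
    ring
  simpa only [one_mul] using ((hcont.isBigO_one ℝ).mul (Asymptotics.isBigO_refl _ _)).congr'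
    hfactor (EventuallyEq.refl _ _)

theorem tendsto_kernelConst_mul_exp_neg_div_div (lam x : ℝ) {b : ℝ} (hb : 0 < b) :
    Tendsto (fun t => kernelConst lam t x * exp (-b / t) / t) (𝓝[>] 0) (𝓝 0) := by
  have hinv := ((tendsto_rpow_mul_exp_neg_mul_atTop_nhds_zero (lam + 3 / 2) b hb).comp
    tendsto_inv_nhdsGT_zero).const_mul
      (2 * x ^ lam / (4 ^ (lam + 1 / 2) * Gamma (lam + 1 / 2)))
  rw [mul_zero] at hinv
  refine hinv.congr' ?_
  filter_upwards [self_mem_nhdsWithin] with t (ht : 0 < t)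
  have hsplit : t ^ (lam + 3 / 2) = t ^ (lam + 1 / 2) * t := by
    rw [← rpow_add_one ht.ne']
    ring_nf
  simp only [Function.comp_apply]
  rw [kernelConst, inv_rpow ht.le, hsplit, mul_rpow (by norm_num) ht.le, div_eq_mul_inv (-b)]
  ring

section SmallTime

variable {lam x : ℝ} (hlam : 0 ≤ lam) (hx : 0 < x)
include hlam hx

theorem besselHeatKernel_le_of_le_abs_sub {t y δ : ℝ} (ht : 0 < t) (ht1 : t ≤ 1) (hy : 0 < y)
    (hδ : 0 ≤ δ) (hxy : δ ≤ |x - y|) :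
    besselHeatKernel lam t x y ≤
      kernelConst lam t x * exp (-(δ ^ 2 / 8) / t) * gaussianWeight lam 8 x y := by
  have hexp : -(x - y) ^ 2 / (4 * t) ≤ -(δ ^ 2 / 8) / t + -(x - y) ^ 2 / 8 := by
    have hδ_sq : δ ^ 2 ≤ (x - y) ^ 2 := by
      rw [← sq_abs (x - y)]
      gcongr
    rw [div_add_div _ _ ht.ne' (by norm_num), div_le_div_iff₀ (by positivity) (by positivity)]
    nlinarith [mul_le_mul_of_nonneg_left hδ_sq ht.le,
      mul_nonneg (mul_nonneg ht.le (sub_nonneg.2 ht1)) (sq_nonneg (x - y))]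
  calc besselHeatKernel lam t x y
      ≤ kernelConst lam t x * gaussianWeight lam (4 * t) x y :=
        besselHeatKernel_le hlam ht hx hy
    _ ≤ kernelConst lam t x * (y ^ lam * exp (-(δ ^ 2 / 8) / t + -(x - y) ^ 2 / 8)) := by
        have := kernelConst_pos hlam ht hx
        unfold gaussianWeight
        gcongr
    _ = kernelConst lam t x * exp (-(δ ^ 2 / 8) / t) * gaussianWeight lam 8 x y := by
        rw [gaussianWeight, exp_add]
        ring

theorem abs_heatSemigroup_le_of_abs_le_near {r e : ℝ → ℝ} (hr : GaussianIntegrable lam x r)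
    (he : GaussianIntegrable lam x e) (he_nonneg : ∀ y > 0, 0 ≤ e y) {δ : ℝ} (hδ : 0 ≤ δ)
    (hre : ∀ y > 0, |x - y| < δ → |r y| ≤ e y) {t : ℝ} (ht : 0 < t) (ht1 : t ≤ 1) :
    |heatSemigroup lam r t x| ≤ heatSemigroup lam e t x +
      kernelConst lam t x * exp (-(δ ^ 2 / 8) / t) *
        ∫ y in Ioi 0, |gaussianWeight lam 8 x y * r y| := by
  have hnear := he.integrableOn_besselHeatKernel_mul hlam ht hx
  have hfar := (hr 8 (by norm_num)).abs.const_mul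
    (kernelConst lam t x * exp (-(δ ^ 2 / 8) / t))
  rw [heatSemigroup, heatSemigroup, ← integral_const_mul, ← integral_add hnear hfar,
    ← norm_eq_abs]
  refine norm_integral_le_of_norm_le (hnear.add hfar) ?_
  filter_upwards [ae_restrict_mem measurableSet_Ioi] with y hy
  have hW := besselHeatKernel_nonneg hlam ht hx hy
  have hw := gaussianWeight_pos lam 8 x hy
  have hκ := kernelConst_pos hlam ht hx
  rw [norm_mul, norm_of_nonneg hW, norm_eq_abs, abs_mul, abs_of_pos hw, ← mul_assoc]
  rcases lt_or_ge |x - y| δ with hxy | hxy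
  · calc besselHeatKernel lam t x y * |r y| ≤ besselHeatKernel lam t x y * e y := by
          gcongr
          exact hre y hy hxy
      _ ≤ _ := le_add_of_nonneg_right (by positivity)
  · calc besselHeatKernel lam t x y * |r y|
        ≤ kernelConst lam t x * exp (-(δ ^ 2 / 8) / t) * gaussianWeight lam 8 x y * |r y| := by
          gcongr
          exact besselHeatKernel_le_of_le_abs_sub hlam hx ht ht1 hy hδ hxy
      _ ≤ _ := le_add_of_nonneg_left (mul_nonneg hW (he_nonneg y hy))

theorem eventually_abs_heatSemigroup_div_lt {r : ℝ → ℝ} (hr : GaussianIntegrable lam x r)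
    {η δ : ℝ} (hη : 0 < η) (hδ : 0 < δ)
    (hre : ∀ y > 0, |x - y| < δ → |r y| ≤ η * testFunction lam x 0 0 1 y) :
    ∀ᶠ t in 𝓝[>] 0, |heatSemigroup lam r t x / t| < η * (x ^ lam * (16 * x ^ 2)) := by
  set J := ∫ y in Ioi 0, |gaussianWeight lam 8 x y * r y|
  have hbound : ∀ᶠ t in 𝓝[>] 0, |heatSemigroup lam r t x / t| ≤
      η * (x ^ lam * (8 * x ^ 2 + 16 * t * ((lam + 1 / 2) * (lam + 3 / 2)))) +
        kernelConst lam t x * exp (-(δ ^ 2 / 8) / t) / t * J := by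
    filter_upwards [Ioo_mem_nhdsGT one_pos] with t ⟨ht, ht1⟩
    have hest := abs_heatSemigroup_le_of_abs_le_near hlam hx hr
      ((gaussianIntegrable_testFunction 0 0 1 hlam).const_mul η)
      (fun y hy => mul_nonneg hη.le (testFunction_zero_zero_one_nonneg lam x hy)) hδ.le hre ht
      ht1.le
    rw [heatSemigroup_const_mul, heatSemigroup_testFunction 0 0 1 hlam ht hx] at hest
    rw [abs_div, abs_of_pos ht, div_le_iff₀ ht]
    refine hest.trans_eq ?_
    field_simp
    ring
  have hnear : Tendsto (fun t =>
      η * (x ^ lam * (8 * x ^ 2 + 16 * t * ((lam + 1 / 2) * (lam + 3 / 2))))) (𝓝[>] 0)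
      (𝓝 (η * (x ^ lam * (8 * x ^ 2 + 16 * 0 * ((lam + 1 / 2) * (lam + 3 / 2)))))) :=
    (Continuous.tendsto (by fun_prop) 0).mono_left nhdsWithin_le_nhds
  have hfar := (tendsto_kernelConst_mul_exp_neg_div_div lam x
    (by positivity : 0 < δ ^ 2 / 8)).mul_const J
  have hlt : η * (x ^ lam * (8 * x ^ 2 + 16 * 0 * ((lam + 1 / 2) * (lam + 3 / 2)))) + 0 * J <
      η * (x ^ lam * (16 * x ^ 2)) := by
    have : 0 < η * (x ^ lam * (8 * x ^ 2)) := by positivity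
    linarith
  filter_upwards [hbound, (hnear.add hfar).eventually_lt_const hlt] with t hle hlt
  exact hle.trans_lt hlt

theorem tendsto_heatSemigroup_div_of_isLittleO {r : ℝ → ℝ} (hr : GaussianIntegrable lam x r)
    (hrx : r =o[𝓝 x] fun y => (y - x) ^ 2) :
    Tendsto (fun t => heatSemigroup lam r t x / t) (𝓝[>] 0) (𝓝 0) := by
  rw [Metric.tendsto_nhds]
  intro ε hε
  obtain ⟨η, hη, hηε⟩ : ∃ η > 0, η * (x ^ lam * (16 * x ^ 2)) = ε :=
    ⟨ε / (x ^ lam * (16 * x ^ 2)), by positivity, by field_simp⟩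
  obtain ⟨δ, hδ, hball⟩ := Metric.eventually_nhds_iff.1
    ((hrx.trans_isBigO (sub_sq_isBigO_testFunction lam hx)).def hη)
  filter_upwards [eventually_abs_heatSemigroup_div_lt hlam hx hr hη hδ fun y hy hxy => by
    have hry := hball (by rwa [dist_comm, dist_eq] : dist y x < δ)
    rwa [norm_eq_abs, norm_of_nonneg (testFunction_zero_zero_one_nonneg lam x hy)] at hry] with t ht
  rwa [dist_zero_right, norm_eq_abs, ← hηε]

theorem tendsto_heatSemigroup_sub_div {u : ℝ → ℝ} (hu : GaussianIntegrable lam x u)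
    {u' : ℝ → ℝ} {u'' : ℝ} (hu' : ∀ᶠ y in 𝓝 x, HasDerivAt u (u' y) y)
    (hu'' : HasDerivAt u' u'' x) :
    Tendsto (fun t => (heatSemigroup lam u t x - u x) / t) (𝓝[>] 0)
      (𝓝 (u'' - lam * (lam - 1) / x ^ 2 * u x)) := by
  obtain ⟨A, B, C, hp, hp', hp''⟩ := exists_testFunction_jet lam hx (u x) (u' x) u''
  set p := testFunction lam x A B C
  have hp_int : GaussianIntegrable lam x p := gaussianIntegrable_testFunction A B C hlam
  have hremainder : (fun y => u y - p y) =o[𝓝 x] fun y => (y - x) ^ 2 := by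
    refine isLittleO_sq_of_hasDerivAt_zero (f' := fun y => u' y - testFunctionDeriv lam x A B C y)
      ?_ ?_ (sub_eq_zero.2 hp.symm) (sub_eq_zero.2 hp'.symm)
    · filter_upwards [hu', eventually_gt_nhds hx] with y hy hy0
      exact hy.sub (hasDerivAt_testFunction A B C hy0)
    · exact (hu''.sub (hasDerivAt_testFunctionDeriv A B C hx)).congr_deriv (sub_eq_zero.2 hp''.symm)
  have hp_lim : Tendsto (fun t => u'' - lam * (lam - 1) / x ^ 2 * u x +
      16 * t * C * x ^ lam * ((lam + 1 / 2) * (lam + 3 / 2))) (𝓝[>] 0)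
      (𝓝 (u'' - lam * (lam - 1) / x ^ 2 * u x)) := by
    refine (Continuous.tendsto' (by fun_prop) 0 _ ?_).mono_left nhdsWithin_le_nhds
    ring
  have hr_lim := tendsto_heatSemigroup_div_of_isLittleO hlam hx (hu.sub hp_int) hremainder
  rw [← add_zero (u'' - _)]
  refine (hp_lim.add hr_lim).congr' ?_
  filter_upwards [self_mem_nhdsWithin] with t (ht : 0 < t)
  have hsplit : heatSemigroup lam u t x =
      heatSemigroup lam p t x + heatSemigroup lam (fun y => u y - p y) t x := by
    rw [← hp_int.heatSemigroup_add (hu.sub hp_int) hlam ht hx]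
    simp only [add_sub_cancel]
  have hpx : u x = x ^ lam * A := by
    rw [← hp]
    simp [p, testFunction]
  rw [hsplit, heatSemigroup_testFunction A B C hlam ht hx, ← hp'', hpx]
  field_simp
  ring

end SmallTime

/-! ### Bounds away from time zero -/

section LargeTime

variable {lam x : ℝ} (hlam : 0 ≤ lam) (hx : 0 < x)
include hlam hx

theorem integrableOn_besselHeatKernel {t : ℝ} (ht : 0 < t) :
    IntegrableOn (besselHeatKernel lam t x) (Ioi 0) := by
  have hone : GaussianIntegrable lam x (fun _ => 1) := by
    simpa only [rpow_zero] using GaussianIntegrable.rpow (p := 0) (by linarith)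
  simpa only [mul_one] using hone.integrableOn_besselHeatKernel_mul hlam ht hx

theorem besselHeatKernel_le_kernelConst_of_le_one {t y : ℝ} (ht : 0 < t) (hy : 0 < y)
    (hy1 : y ≤ 1) : besselHeatKernel lam t x y ≤ kernelConst lam t x := by
  have hweight : gaussianWeight lam (4 * t) x y ≤ 1 := by
    refine mul_le_one₀ (rpow_le_one hy.le hy1 hlam) (exp_pos _).le (exp_le_one_iff.2 ?_)
    exact div_nonpos_of_nonpos_of_nonneg (neg_nonpos.2 (sq_nonneg _)) (by positivity)
  exact (besselHeatKernel_le hlam ht hx hy).trans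
    (mul_le_of_le_one_right (kernelConst_pos hlam ht hx).le hweight)

/-- For `y ≥ 1` the kernel is at most `W_t(x, y) y^λ`, whose integral is `x^λ` at all times. -/
theorem heatOne_le {t : ℝ} (ht : 0 < t) : heatOne lam t x ≤ kernelConst lam t x + x ^ lam := by
  have hpow : GaussianIntegrable lam x (fun y => y ^ lam) := .rpow (by linarith)
  have hpow_int := hpow.integrableOn_besselHeatKernel_mul hlam ht hx
  have hind_int : IntegrableOn ((Ioc (0 : ℝ) 1).indicator fun _ => kernelConst lam t x)
      (Ioi 0) := by
    have hconst : IntegrableOn (fun _ => kernelConst lam t x) (Ioc (0 : ℝ) 1) :=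
      integrableOn_const measure_Ioc_lt_top.ne
    exact (hconst.integrable_indicator measurableSet_Ioc).integrableOn
  have hind : ∫ y in Ioi 0, (Ioc (0 : ℝ) 1).indicator (fun _ => kernelConst lam t x) y =
      kernelConst lam t x := by
    rw [setIntegral_indicator measurableSet_Ioc, inter_eq_right.2 Ioc_subset_Ioi_self]
    simp
  calc heatOne lam t x
      ≤ ∫ y in Ioi 0, ((Ioc (0 : ℝ) 1).indicator (fun _ => kernelConst lam t x) y +
          besselHeatKernel lam t x y * y ^ lam) := by
        refine setIntegral_mono_on (integrableOn_besselHeatKernel hlam hx ht)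
          (hind_int.add hpow_int) measurableSet_Ioi fun y (hy : 0 < y) => ?_
        have hW := besselHeatKernel_nonneg hlam ht hx hy
        rcases le_or_gt y 1 with hy1 | hy1
        · have hmem : y ∈ Ioc (0 : ℝ) 1 := ⟨hy, hy1⟩
          rw [indicator_of_mem hmem]
          exact (besselHeatKernel_le_kernelConst_of_le_one hlam hx ht hy hy1).trans
            (le_add_of_nonneg_right (by positivity))
        · rw [indicator_of_notMem fun h => hy1.not_ge h.2, zero_add]
          exact le_mul_of_one_le_right hW (one_le_rpow hy1.le hlam)
    _ = kernelConst lam t x + x ^ lam := by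
        rw [integral_add hind_int hpow_int, hind, ← heatSemigroup_rpow hlam ht hx, heatSemigroup]

theorem kernelConst_anti {s t : ℝ} (hs : 0 < s) (hst : s ≤ t) :
    kernelConst lam t x ≤ kernelConst lam s x := by
  have := Gamma_pos_of_pos (by positivity : 0 < lam + 1 / 2)
  unfold kernelConst
  gcongr

theorem abs_heatSemigroup_le_mul_heatOne {u : ℝ → ℝ}
    (hu : MemLp u ⊤ (volume.restrict (Ioi 0))) {t : ℝ} (ht : 0 < t) :
    |heatSemigroup lam u t x| ≤ lpNorm u ⊤ (volume.restrict (Ioi 0)) * heatOne lam t x := by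
  rw [heatSemigroup, heatOne, ← integral_const_mul, ← norm_eq_abs]
  refine norm_integral_le_of_norm_le ((integrableOn_besselHeatKernel hlam hx ht).const_mul _) ?_
  filter_upwards [ae_restrict_mem measurableSet_Ioi, ae_le_lpNorm_exponent_top hu] with y hy hu_y
  have hW := besselHeatKernel_nonneg hlam ht hx hy
  rw [norm_mul, norm_of_nonneg hW, mul_comm]
  gcongr

theorem exists_abs_heatSemigroup_le {u : ℝ → ℝ} (hu : MemLp u ⊤ (volume.restrict (Ioi 0)))
    {δ : ℝ} (hδ : 0 < δ) : ∃ M, ∀ t ≥ δ, |heatSemigroup lam u t x| ≤ M := by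
  refine ⟨lpNorm u ⊤ (volume.restrict (Ioi 0)) * (kernelConst lam δ x + x ^ lam), fun t ht => ?_⟩
  have ht0 : 0 < t := hδ.trans_le ht
  have hone : heatOne lam t x ≤ kernelConst lam δ x + x ^ lam :=
    (heatOne_le hlam hx ht0).trans (add_le_add_left (kernelConst_anti hlam hx hδ ht) _)
  exact (abs_heatSemigroup_le_mul_heatOne hlam hx hu ht0).trans
    (mul_le_mul_of_nonneg_left hone lpNorm_nonneg)

end LargeTime

/-! ### An Abelian limit -/

theorem integral_Ioi_comp_rpow_div_rpow (F : ℝ → ℝ) {p : ℝ} (hp : 0 < p) :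
    ∫ s in Ioi 0, F (s ^ p) / s ^ p = p⁻¹ * ∫ t in Ioi 0, F t * t ^ (-1 - (1 - p⁻¹)) := by
  rw [← integral_comp_rpow_Ioi_of_pos (g := fun t => F t * t ^ (-1 - (1 - p⁻¹))) hp,
    ← integral_const_mul]
  refine setIntegral_congr_fun measurableSet_Ioi fun s (hs : 0 < s) => ?_
  have hexp : (s ^ p) ^ (-1 - (1 - p⁻¹)) = s / (s ^ p * s ^ p) := by
    rw [← rpow_mul hs.le, ← rpow_add hs]
    nth_rewrite 2 [← rpow_one s]
    rw [← rpow_sub hs]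
    congr 1
    field_simp
    ring
  have := rpow_pos_of_pos hs p
  simp only [smul_eq_mul]
  rw [hexp, rpow_sub_one hs.ne']
  field_simp

theorem quasiMeasurePreserving_rpow_Ioi {p : ℝ} (hp : p ≠ 0) :
    Measure.QuasiMeasurePreserving (fun s : ℝ => s ^ p)
      (volume.restrict (Ioi 0)) (volume.restrict (Ioi 0)) := by
  refine ⟨by fun_prop, Measure.AbsolutelyContinuous.mk fun N hN hN0 => ?_⟩
  rw [Measure.restrict_apply hN] at hN0
  have hmeas : Measurable fun s : ℝ => s ^ p := by fun_prop
  rw [Measure.map_apply hmeas hN, Measure.restrict_apply (hmeas hN)]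
  refine measure_mono_null (t := (fun t : ℝ => t ^ p⁻¹) '' (N ∩ Ioi 0))
    (fun s ⟨hsN, (hs : 0 < s)⟩ => ⟨s ^ p, ⟨hsN, rpow_pos_of_pos hs p⟩, rpow_rpow_inv hs.le hp⟩)
    (addHaar_image_eq_zero_of_differentiableOn_of_addHaar_eq_zero volume (fun t ht => ?_) hN0)
  exact (differentiableAt_rpow_const_of_ne _ ht.2.ne').differentiableWithinAt

theorem exists_abs_le_mul_min_of_tendsto_div {F : ℝ → ℝ} {L : ℝ}
    (hF0 : Tendsto (fun t => F t / t) (𝓝[>] 0) (𝓝 L))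
    (hFb : ∀ δ > 0, ∃ C, ∀ t ≥ δ, |F t| ≤ C) :
    ∃ C, ∀ t > 0, |F t| ≤ C * min t 1 := by
  obtain ⟨δ, hδ, hnear⟩ := mem_nhdsGT_iff_exists_Ioo_subset.1
    (hF0.abs.eventually_lt_const (lt_add_one |L|))
  obtain ⟨M, hM⟩ := hFb (min δ 1) (lt_min hδ one_pos)
  refine ⟨max (|L| + 1) (M / min δ 1), fun t ht => ?_⟩
  rcases lt_or_ge t (min δ 1) with htδ | htδ
  · have hratio : |F t / t| < |L| + 1 := hnear ⟨ht, htδ.trans_le (min_le_left _ _)⟩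
    rw [abs_div, abs_of_pos ht, div_lt_iff₀ ht] at hratio
    rw [min_eq_left (htδ.le.trans (min_le_right _ _))]
    exact hratio.le.trans (mul_le_mul_of_nonneg_right (le_max_left _ _) ht.le)
  · have hδ1 : 0 < min δ 1 := lt_min hδ one_pos
    calc |F t| ≤ M := hM t htδ
      _ = M / min δ 1 * min δ 1 := (div_mul_cancel₀ M hδ1.ne').symm
      _ ≤ max (|L| + 1) (M / min δ 1) * min t 1 :=
        mul_le_mul (le_max_right _ _) (le_min htδ (min_le_right _ _)) hδ1.le (by positivity)

section Abelian

variable {F : ℝ → ℝ} {L : ℝ}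

theorem tendsto_comp_rpow_div_rpow_of_lt_one (hF0 : Tendsto (fun t => F t / t) (𝓝[>] 0) (𝓝 L))
    {s : ℝ} (hs : 0 < s) (hs1 : s < 1) :
    Tendsto (fun p : ℝ => F (s ^ p) / s ^ p) atTop (𝓝 L) :=
  hF0.comp <| tendsto_nhdsWithin_iff.2
    ⟨tendsto_rpow_atTop_of_base_lt_one s (by linarith) hs1,
      .of_forall fun p => rpow_pos_of_pos hs p⟩

theorem tendsto_comp_rpow_div_rpow_of_one_lt {C : ℝ} (hF : ∀ t > 0, |F t| ≤ C * min t 1)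
    {s : ℝ} (hs : 1 < s) :
    Tendsto (fun p : ℝ => F (s ^ p) / s ^ p) atTop (𝓝 0) := by
  have hbdd : ∀ p : ℝ, |F (s ^ p)| ≤ |C| := fun p => by
    have hpos := rpow_pos_of_pos (one_pos.trans hs) p
    calc |F (s ^ p)| ≤ C * min (s ^ p) 1 := hF _ hpos
      _ ≤ |C| * 1 := by gcongr; exacts [le_abs_self C, min_le_right _ _]
      _ = |C| := mul_one _
  have hinv : Tendsto (fun p : ℝ => (s ^ p)⁻¹) atTop (𝓝 0) :=
    tendsto_inv_atTop_zero.comp (tendsto_rpow_atTop_of_base_gt_one s hs)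
  exact bdd_le_mul_tendsto_zero' |C| (.of_forall hbdd) hinv

theorem abs_comp_rpow_div_rpow_le {C : ℝ} (hF : ∀ t > 0, |F t| ≤ C * min t 1)
    {s p : ℝ} (hs : 0 < s) (hp : 2 ≤ p) :
    |F (s ^ p) / s ^ p| ≤ C * (2 * (1 + s ^ 2)⁻¹) := by
  have hpos := rpow_pos_of_pos hs p
  have hC : 0 ≤ C := by simpa using (abs_nonneg _).trans (hF 1 one_pos)
  have hmin : min (s ^ p) 1 / s ^ p ≤ 2 * (1 + s ^ 2)⁻¹ := by
    rw [← div_eq_mul_inv, div_le_div_iff₀ hpos (by positivity)]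
    rcases le_total s 1 with hs1 | hs1
    · have hs2 : s ^ 2 ≤ 1 := pow_le_one₀ hs.le hs1
      nlinarith [min_le_left (s ^ p) 1]
    · have hs2 : s ^ 2 ≤ s ^ p := by
        simpa only [rpow_two] using rpow_le_rpow_of_exponent_le hs1 hp
      nlinarith [min_le_right (s ^ p) 1, one_le_pow₀ hs1 (n := 2)]
  calc |F (s ^ p) / s ^ p| = |F (s ^ p)| / s ^ p := by rw [abs_div, abs_of_pos hpos]
    _ ≤ C * min (s ^ p) 1 / s ^ p := by
      gcongr
      exact hF _ hpos
    _ ≤ C * (2 * (1 + s ^ 2)⁻¹) := by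
      rw [mul_div_assoc]
      gcongr

theorem tendsto_integral_comp_rpow_div_rpow
    (hF_meas : AEStronglyMeasurable F (volume.restrict (Ioi 0)))
    (hF0 : Tendsto (fun t => F t / t) (𝓝[>] 0) (𝓝 L)) (hFb : ∀ δ > 0, ∃ C, ∀ t ≥ δ, |F t| ≤ C) :
    Tendsto (fun p : ℝ => ∫ s in Ioi 0, F (s ^ p) / s ^ p) atTop (𝓝 L) := by
  obtain ⟨C, hC⟩ := exists_abs_le_mul_min_of_tendsto_div hF0 hFb
  have hlimit : ∫ s in Ioi (0 : ℝ), (Iio (1 : ℝ)).indicator (fun _ => L) s = L := by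
    rw [setIntegral_indicator measurableSet_Iio, Ioi_inter_Iio]
    simp
  rw [← hlimit]
  refine tendsto_integral_filter_of_dominated_convergence (fun s => C * (2 * (1 + s ^ 2)⁻¹))
    ?_ ?_ ((integrable_inv_one_add_sq.const_mul 2).const_mul C).integrableOn ?_
  · filter_upwards [eventually_ne_atTop 0] with p hp
    have hmeas : Measurable fun s : ℝ => s ^ p := by fun_prop
    have hcomp := hF_meas.comp_quasiMeasurePreserving (quasiMeasurePreserving_rpow_Ioi hp)
    exact (hcomp.aemeasurable.div hmeas.aemeasurable).aestronglyMeasurable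
  · filter_upwards [eventually_ge_atTop 2] with p hp
    exact ae_restrict_of_forall_mem measurableSet_Ioi fun s hs =>
      abs_comp_rpow_div_rpow_le hC hs hp
  · filter_upwards [ae_restrict_mem measurableSet_Ioi, ae_restrict_of_ae (volume.ae_ne 1)]
      with s (hs : 0 < s) hs1
    rcases hs1.lt_or_gt with hs1 | hs1
    · rw [indicator_of_mem (mem_Iio.2 hs1)]
      exact tendsto_comp_rpow_div_rpow_of_lt_one hF0 hs hs1
    · rw [indicator_of_notMem (notMem_Iio.2 hs1.le)]
      exact tendsto_comp_rpow_div_rpow_of_one_lt hC hs1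

theorem tendsto_neg_div_Gamma_two_sub :
    Tendsto (fun σ => -σ / Gamma (2 - σ)) (𝓝[<] 1) (𝓝 (-1)) := by
  have hGamma_one : Gamma (2 - 1) = 1 := by norm_num
  have hGamma : ContinuousAt Gamma (2 - 1) :=
    (differentiableOn_Gamma_Ioi.differentiableAt (Ioi_mem_nhds (by norm_num))).continuousAt
  have hcont : ContinuousAt (fun σ => -σ / Gamma (2 - σ)) 1 :=
    continuousAt_id.neg.div (hGamma.comp (f := fun σ => 2 - σ) (by fun_prop))
      (by rw [hGamma_one]; exact one_ne_zero)
  simpa only [hGamma_one, div_one] using hcont.tendsto.mono_left nhdsWithin_le_nhds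

/-- The substitution `t = s ^ (1 / (1 - σ))` absorbs the factor `1 - σ` of `1 / Γ(-σ)`. -/
theorem tendsto_one_div_gammaNeg_mul_integral
    (hF_meas : AEStronglyMeasurable F (volume.restrict (Ioi 0)))
    (hF0 : Tendsto (fun t => F t / t) (𝓝[>] 0) (𝓝 L)) (hFb : ∀ δ > 0, ∃ C, ∀ t ≥ δ, |F t| ≤ C) :
    Tendsto (fun σ => 1 / gammaNeg σ * ∫ t in Ioi 0, F t * t ^ (-1 - σ)) (𝓝[<] 1) (𝓝 (-L)) := by
  have hexponent : Tendsto (fun σ : ℝ => (1 - σ)⁻¹) (𝓝[<] 1) atTop := by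
    refine tendsto_inv_nhdsGT_zero.comp (tendsto_nhdsWithin_iff.2 ⟨?_, ?_⟩)
    · exact (Continuous.tendsto' (by fun_prop) _ _ (sub_self 1)).mono_left nhdsWithin_le_nhds
    · filter_upwards [self_mem_nhdsWithin] with σ hσ using sub_pos.2 (mem_Iio.1 hσ)
  rw [← neg_one_mul L]
  refine (tendsto_neg_div_Gamma_two_sub.mul
    ((tendsto_integral_comp_rpow_div_rpow hF_meas hF0 hFb).comp hexponent)).congr' ?_
  filter_upwards [self_mem_nhdsWithin] with σ (hσ : σ < 1)
  rw [Function.comp_apply, integral_Ioi_comp_rpow_div_rpow F (inv_pos.2 (sub_pos.2 hσ)), inv_inv,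
    sub_sub_cancel, gammaNeg, one_div_div]
  ring

end Abelian

theorem limit_sigma_one_general {lam x : ℝ} (hlam : 0 ≤ lam) (hx : 0 < x) {u u' : ℝ → ℝ}
    {u'' : ℝ} (hu : MemLp u ⊤ (volume.restrict (Ioi 0)))
    (hu' : ∀ᶠ y in 𝓝 x, HasDerivAt u (u' y) y) (hu'' : HasDerivAt u' u'' x) :
    Tendsto (fun σ => 1 / gammaNeg σ *
        ∫ t in Ioi 0, (heatSemigroup lam u t x - u x) * t ^ (-1 - σ))
      (𝓝[<] 1) (𝓝 (-u'' + lam * (lam - 1) / x ^ 2 * u x)) := by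
  have hmeas : AEStronglyMeasurable (fun t => heatSemigroup lam u t x - u x)
      (volume.restrict (Ioi 0)) :=
    (aestronglyMeasurable_heatSemigroup hlam hx hu.1).sub aestronglyMeasurable_const
  have hsmall := tendsto_heatSemigroup_sub_div hlam hx
    (GaussianIntegrable.of_memLp_top (by linarith) hu) hu' hu''
  have hlarge : ∀ δ > 0, ∃ C, ∀ t ≥ δ, |heatSemigroup lam u t x - u x| ≤ C := fun δ hδ => by
    obtain ⟨M, hM⟩ := exists_abs_heatSemigroup_le hlam hx hu hδ
    exact ⟨M + |u x|, fun t ht => (abs_sub _ _).trans (add_le_add_left (hM t ht) _)⟩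
  rw [neg_add_eq_sub, ← neg_sub]
  exact tendsto_one_div_gammaNeg_mul_integral hmeas hsmall hlarge

/-- Pointwise limit of `Δ_λ^σ u` as `σ → 1⁻`: one recovers the Bessel operator `Δ_λ u`. -/
theorem limit_sigma_one
    (lam : ℝ) (hlam : 2 ≤ lam)
    (u : ℝ → ℝ) (hbdd : ∃ M : ℝ, ∀ x ∈ Set.Ioi (0 : ℝ), |u x| ≤ M)
    (hC2 : ContDiffOn ℝ 2 u (Set.Ioi 0))
    (hbdd' : ∃ M : ℝ, ∀ x ∈ Set.Ioi (0 : ℝ), |deriv u x| ≤ M) :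
    ∀ x : ℝ, 0 < x →
      Tendsto (fun σ : ℝ => 1 / gammaNeg σ *
          ∫ t in Set.Ioi (0 : ℝ), (heatSemigroup lam u t x - u x) * t ^ (-1 - σ))
        (nhdsWithin 1 (Set.Iio 1))
        (nhds (-deriv (deriv u) x + lam * (lam - 1) / x ^ 2 * u x)) := by
  intro x hx
  obtain ⟨M, hM⟩ := hbdd
  have hu : MemLp u ⊤ (volume.restrict (Ioi 0)) :=
    memLp_top_of_bound (hC2.continuousOn.aestronglyMeasurable measurableSet_Ioi) M
      (ae_restrict_of_forall_mem measurableSet_Ioi hM)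
  have hu' : ∀ᶠ y in 𝓝 x, HasDerivAt u (deriv u y) y := by
    filter_upwards [Ioi_mem_nhds hx] with y hy
    exact ((hC2.contDiffAt (Ioi_mem_nhds hy)).differentiableAt two_ne_zero).hasDerivAt
  have hu'' : HasDerivAt (deriv u) (deriv (deriv u) x) x :=
    (((hC2.deriv_of_isOpen (m := 1) isOpen_Ioi (by norm_num)).contDiffAt
      (Ioi_mem_nhds hx)).differentiableAt one_ne_zero).hasDerivAt
  exact limit_sigma_one_general (by linarith) hx hu hu' hu''
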